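/- Let S be a set of q − 1 + a points in PG(2,q) with a ≥ 3, and suppose ℓ is an a-secant of S such that there is a unique tangent to S at each point of S ∩ ℓ; let N_ℓ be the nucleus of ℓ. If there is a point of S contained in no tangent to S, then p divides a. Moreover, if a = 3 and there are two points of S each contained in no tangent to S, then the line determined by these two points contains N_ℓ. -/

import Mathlib

/-! Common setup: the Desarguesian projective plane `PG(2,q)` over a finite field `F = GF(q)`.
Points are the projective points of `F³`; lines are the 2-dimensional linear subspaces of `F³`,
with incidence given by containment. -/

/-- Points of `PG(2,F)`. -/
abbrev PGPoint (F : Type*) [Field F] := Projectivization F (Fin 3 → F)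

/-- Lines of `PG(2,F)`: the 2-dimensional linear subspaces of `F³`. -/
abbrev PGLine (F : Type*) [Field F] := {W : Submodule F (Fin 3 → F) // Module.finrank F W = 2}

/-- Incidence between a point and a line of `PG(2,F)`. -/
def pgMem {F : Type*} [Field F] (P : PGPoint F) (L : PGLine F) : Prop :=
  P.submodule ≤ L.val

/-- The number of points of the point set `B` lying on the line `L`;
`L` is a *`k`-secant* of `B` if `nsec B L = k`, a *tangent* if `k = 1`,
a *bisecant* if `k = 2` and a *trisecant* if `k = 3`. -/
noncomputable def nsec {F : Type*} [Field F] (B : Set (PGPoint F)) (L : PGLine F) : ℕ :=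
  {P ∈ B | pgMem P L}.ncard

/-- A blocking set: a point set meeting every line. -/
def isBlocking {F : Type*} [Field F] (B : Set (PGPoint F)) : Prop :=
  ∀ L : PGLine F, ∃ P ∈ B, pgMem P L

/-- A minimal blocking set: every point is essential. -/
def isMinimalBlocking {F : Type*} [Field F] (B : Set (PGPoint F)) : Prop :=
  isBlocking B ∧ ∀ P ∈ B, ¬ isBlocking (B \ {P})

/-- `B` is a blocking set of Rédei type with Rédei line `ℓ`: a blocking set of size
`q + N ≤ 2q` such that `ℓ` meets `B` in exactly `N = |B| − q` points. -/
def isRedeiWithLine {F : Type*} [Field F] (q : ℕ) (B : Set (PGPoint F)) (ℓ : PGLine F) : Prop :=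
  isBlocking B ∧ B.ncard ≤ 2 * q ∧ nsec B ℓ + q = B.ncard

/-- A semioval: through each of its points there passes exactly one tangent. -/
def isSemioval {F : Type*} [Field F] (S : Set (PGPoint F)) : Prop :=
  ∀ P ∈ S, ∃! t : PGLine F, pgMem P t ∧ nsec S t = 1

/-- The determinant of two vectors of the plane `F²`. -/
def planeDet {F : Type*} [Field F] (v w : Fin 2 → F) : F := v 0 * w 1 - v 1 * w 0

section Cross

variable {F : Type*} [Field F]

theorem planeDet_self (v : Fin 2 → F) : planeDet v v = 0 := by
  simp only [planeDet]; ring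

theorem planeDet_smul_left (c : F) (v w : Fin 2 → F) : planeDet (c • v) w = c * planeDet v w := by
  simp only [planeDet, Pi.smul_apply, smul_eq_mul]; ring

theorem planeDet_smul_right (c : F) (v w : Fin 2 → F) : planeDet v (c • w) = c * planeDet v w := by
  simp only [planeDet, Pi.smul_apply, smul_eq_mul]; ring

theorem planeDet_sub_right (v u w : Fin 2 → F) : planeDet v (u - w) = planeDet v u - planeDet v w := by
  simp only [planeDet, Pi.sub_apply]; ring

theorem exists_smul_eq_of_planeDet_eq_zero {v w : Fin 2 → F} (hv : v ≠ 0) (h : planeDet v w = 0) :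
    ∃ c : F, w = c • v := by
  simp only [planeDet] at h
  by_cases h0 : v 0 = 0
  · have h1 : v 1 ≠ 0 := fun h1 => hv (by ext i; fin_cases i <;> simp [h0, h1])
    refine ⟨w 1 / v 1, ?_⟩
    ext i
    fin_cases i
    · simp_all
    · simp [h1]
  · refine ⟨w 0 / v 0, ?_⟩
    ext i
    fin_cases i
    · simp [h0]
    · simp only [Fin.mk_one, Pi.smul_apply, smul_eq_mul]
      field_simp
      linear_combination h

end Cross

section PowerSum

variable {F : Type*} [Field F] [Fintype F]

/-- A product of fewer than `2 (q - 1)` linear forms sums to zero over `F²`. -/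
theorem sum_planeDet_mul_prod_planeDet_eq_zero {ι : Type*} (e : Fin 2 → F) (s : Finset ι)
    (w : ι → Fin 2 → F) (hs : s.card + 1 < (Fintype.card F - 1) * 2) :
    ∑ v : Fin 2 → F, planeDet e v * ∏ i ∈ s, planeDet v (w i) = 0 := by
  classical
  open MvPolynomial in
  have hdeg : ∀ b c : F, (X 0 * C b - X 1 * C c : MvPolynomial (Fin 2) F).totalDegree ≤ 1 := by
    intro b c
    refine (totalDegree_sub _ _).trans (max_le ?_ ?_) <;>
      exact (totalDegree_mul _ _).trans (by simp)
  have key := MvPolynomial.sum_eval_eq_zero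
    ((MvPolynomial.X 0 * MvPolynomial.C (-e 1) - MvPolynomial.X 1 * MvPolynomial.C (-e 0)) *
      ∏ i ∈ s, (MvPolynomial.X 0 * MvPolynomial.C (w i 1) -
        MvPolynomial.X 1 * MvPolynomial.C (w i 0)) : MvPolynomial (Fin 2) F) (by
    refine lt_of_le_of_lt ((MvPolynomial.totalDegree_mul _ _).trans (add_le_add (hdeg _ _)
      ((MvPolynomial.totalDegree_finsetProd _ _).trans
        (Finset.sum_le_card_nsmul _ _ 1 fun i _ => hdeg _ _)))) ?_
    simp only [smul_eq_mul, mul_one, Fintype.card_fin]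
    omega)
  rw [← key]
  refine Finset.sum_congr rfl fun v _ => ?_
  simp only [map_mul, map_sub, map_prod, MvPolynomial.eval_X, MvPolynomial.eval_C, planeDet]
  ring

variable [DecidableEq F] {U R : Finset (Fin 2 → F)} {T : Fin 2 → F}

theorem prod_erase_planeDet_sub (hU : U.card = Fintype.card F - 1) (hT : T ∈ U) {r : Fin 2 → F}
    (hr : ∀ c : F, c ≠ 0 → ∃ u ∈ U, planeDet r u = c) :
    planeDet r T ≠ 0 ∧ ∏ u ∈ U.erase T, planeDet r (u - T) =
      -(∏ c ∈ Finset.univ.erase (0 : F), c) * (planeDet r T)⁻¹ := by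
  have hsub : Finset.univ.erase (0 : F) ⊆ U.image (planeDet r) := by
    intro c hc
    obtain ⟨u, hu, h⟩ := hr c (Finset.ne_of_mem_erase hc)
    exact Finset.mem_image.2 ⟨u, hu, h⟩
  have hcard : (Finset.univ.erase (0 : F)).card = U.card := by
    rw [Finset.card_erase_of_mem (Finset.mem_univ _), hU, Finset.card_univ]
  have himg : Finset.univ.erase (0 : F) = U.image (planeDet r) :=
    Finset.eq_of_subset_of_card_le hsub (Finset.card_image_le.trans hcard.ge)
  have hinj : Set.InjOn (planeDet r) U := Finset.card_image_iff.1 (by rw [← himg, hcard])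
  have hτ : planeDet r T ≠ 0 :=
    Finset.ne_of_mem_erase (himg ▸ Finset.mem_image_of_mem (planeDet r) hT)
  refine ⟨hτ, ?_⟩
  have h0 : -planeDet r T ∈ Finset.univ.erase (0 : F) := by simpa using hτ
  rw [eq_mul_inv_iff_mul_eq₀ hτ, ← Finset.mul_prod_erase _ _ h0]
  have : ∏ u ∈ U.erase T, planeDet r (u - T) =
      ∏ c ∈ (Finset.univ.erase (0 : F)).erase (-planeDet r T), c := by
    refine Finset.prod_bij (fun u _ => planeDet r (u - T)) ?_ ?_ ?_ (fun _ _ => rfl)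
    · intro u hu
      obtain ⟨huT, hu⟩ := Finset.mem_erase.1 hu
      have h1 : planeDet r u ≠ 0 :=
        Finset.ne_of_mem_erase (himg ▸ Finset.mem_image_of_mem (planeDet r) hu)
      simp only [planeDet_sub_right, Finset.mem_erase, Finset.mem_univ, and_true]
      refine ⟨fun h => h1 (by linear_combination h), fun h => huT (hinj hu hT ?_)⟩
      linear_combination h
    · intro u hu v hv h
      simp only [planeDet_sub_right, sub_left_inj] at h
      exact hinj (Finset.mem_of_mem_erase hu) (Finset.mem_of_mem_erase hv) h
    · intro c hc
      simp only [Finset.mem_erase, Finset.mem_univ, and_true] at hc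
      obtain ⟨u, hu, h⟩ := hr (c + planeDet r T) fun h => hc.1 (by linear_combination h)
      refine ⟨u, Finset.mem_erase.2 ⟨?_, hu⟩, ?_⟩
      · rintro rfl
        exact hc.2 (by linear_combination -h)
      · rw [planeDet_sub_right, h]; ring
  rw [this]
  ring

/-- The vectors `r / det(r, T)`, for `r` running over the directions not determined by
`U ∪ {0}`, sum to zero whenever every other direction is determined by `T` and a point of `U`. -/
theorem sum_planeDet_mul_inv_planeDet_eq_zero (hU : U.card = Fintype.card F - 1) (hT : T ∈ U)
    (hcov : ∀ r ∈ R, ∀ c : F, c ≠ 0 → ∃ u ∈ U, planeDet r u = c)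
    (hR : ∀ r ∈ R, ∀ s ∈ R, r ≠ s → planeDet r s ≠ 0)
    (hdir : ∀ d : Fin 2 → F, d ≠ 0 → (∀ r ∈ R, planeDet d r ≠ 0) →
      ∃ u ∈ U, u ≠ T ∧ planeDet d u = planeDet d T) (e : Fin 2 → F) :
    ∑ r ∈ R, planeDet e r * (planeDet r T)⁻¹ = 0 := by
  have hpos : 0 < U.card := Finset.card_pos.2 ⟨T, hT⟩
  have hne : ∀ r ∈ R, r ≠ 0 := by
    rintro r hr rfl
    exact (prod_erase_planeDet_sub hU hT (hcov _ hr)).1 (by simp [planeDet])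
  have hzero := sum_planeDet_mul_prod_planeDet_eq_zero e (U.erase T) (fun u => u - T) (by
    rw [Finset.card_erase_of_mem hT]; omega)
  set W : F := ∏ c ∈ Finset.univ.erase (0 : F), c
  have hW : W ≠ 0 := Finset.prod_ne_zero_iff.2 fun c hc => Finset.ne_of_mem_erase hc
  have hsum : ∑ x ∈ R ×ˢ (Finset.univ : Finset Fˣ), planeDet e x.1 * (-W * (planeDet x.1 T)⁻¹) =
      ∑ v : Fin 2 → F, planeDet e v * ∏ u ∈ U.erase T, planeDet v (u - T) := by
    refine Finset.sum_of_injOn (fun x => (x.2 : F) • x.1) ?_ (fun _ _ => by simp) ?_ ?_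
    · rintro ⟨r, c⟩ hr ⟨s, d⟩ hs h
      simp only [Finset.coe_product, Set.mem_prod, Finset.mem_coe] at hr hs h
      have hrs : r = s := by
        by_contra hrs
        apply hR r hr.1 s hs.1 hrs
        have := congrArg (planeDet r) h
        rw [planeDet_smul_right, planeDet_smul_right, planeDet_self, mul_zero] at this
        exact (mul_eq_zero.1 this.symm).resolve_left d.ne_zero
      subst hrs
      have := smul_left_injective F (hne r hr.1) h
      rw [Units.ext this]
    · intro v _ hv
      by_cases hv0 : v = 0
      · simp [hv0, planeDet]
      by_cases hd : ∀ r ∈ R, planeDet v r ≠ 0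
      · obtain ⟨u, hu, huT, h⟩ := hdir v hv0 hd
        rw [Finset.prod_eq_zero (Finset.mem_erase.2 ⟨huT, hu⟩), mul_zero]
        rw [planeDet_sub_right, h, sub_self]
      · exfalso
        push Not at hd
        obtain ⟨r, hr, h⟩ := hd
        obtain ⟨c, rfl⟩ := exists_smul_eq_of_planeDet_eq_zero hv0 h
        have hc : c ≠ 0 := by
          rintro rfl
          exact hne _ hr (zero_smul _ _)
        refine hv ⟨(c • v, (Units.mk0 c hc)⁻¹), by simpa using hr, ?_⟩
        simp [smul_smul, hc]
    · rintro ⟨r, c⟩ hr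
      have hr : r ∈ R := by simpa using hr
      simp only [planeDet_smul_left, planeDet_smul_right, Finset.prod_mul_distrib, Finset.prod_const]
      rw [← (prod_erase_planeDet_sub hU hT (hcov r hr)).2, Finset.card_erase_of_mem hT]
      have hc : (c : F) * (c : F) ^ (U.card - 1) = 1 := by
        rw [mul_pow_sub_one hpos.ne', hU]
        exact FiniteField.pow_card_sub_one_eq_one _ c.ne_zero
      linear_combination -(planeDet e r * ∏ u ∈ U.erase T, planeDet r (u - T)) * hc
  rw [hzero, Finset.sum_product] at hsum
  simp only [Finset.sum_const, Finset.card_univ, Fintype.card_units, nsmul_eq_mul] at hsum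
  rw [← Finset.mul_sum, Nat.cast_sub Fintype.card_pos, FiniteField.cast_card_eq_zero] at hsum
  have h2 : ∑ r ∈ R, planeDet e r * (-W * (planeDet r T)⁻¹) =
      -W * ∑ r ∈ R, planeDet e r * (planeDet r T)⁻¹ := by
    rw [Finset.mul_sum]
    exact Finset.sum_congr rfl fun _ _ => by ring
  rw [h2] at hsum
  simpa [hW] using hsum

/-- Under the hypotheses of `sum_planeDet_mul_inv_planeDet_eq_zero`, the number of undetermined
directions vanishes in `F`. -/
theorem cast_card_directions_eq_zero (hU : U.card = Fintype.card F - 1) (hT : T ∈ U)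
    (hcov : ∀ r ∈ R, ∀ c : F, c ≠ 0 → ∃ u ∈ U, planeDet r u = c)
    (hR : ∀ r ∈ R, ∀ s ∈ R, r ≠ s → planeDet r s ≠ 0)
    (hdir : ∀ d : Fin 2 → F, d ≠ 0 → (∀ r ∈ R, planeDet d r ≠ 0) →
      ∃ u ∈ U, u ≠ T ∧ planeDet d u = planeDet d T) :
    (R.card : F) = 0 := by
  have h := sum_planeDet_mul_inv_planeDet_eq_zero hU hT hcov hR hdir (-T)
  rw [Finset.sum_congr rfl (g := fun _ => (1 : F)) fun r hr => ?_] at h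
  · simpa using h
  · rw [mul_inv_eq_one₀ (prod_erase_planeDet_sub hU hT (hcov r hr)).1]
    simp only [planeDet, Pi.neg_apply]
    ring

/-- For three undetermined directions, all points `T` of `U` which determine every other direction
lie on one line through the origin. -/
theorem exists_forall_eq_smul_of_card_eq_three (hU : U.card = Fintype.card F - 1)
    (hcov : ∀ r ∈ R, ∀ c : F, c ≠ 0 → ∃ u ∈ U, planeDet r u = c)
    (hR : ∀ r ∈ R, ∀ s ∈ R, r ≠ s → planeDet r s ≠ 0) (hcard : R.card = 3) :
    ∃ w : Fin 2 → F, ∀ T ∈ U, (∀ d : Fin 2 → F, d ≠ 0 → (∀ r ∈ R, planeDet d r ≠ 0) →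
      ∃ u ∈ U, u ≠ T ∧ planeDet d u = planeDet d T) → ∃ c : F, T = c • w := by
  obtain ⟨x, y, z, hxy, hxz, hyz, rfl⟩ := Finset.card_eq_three.1 hcard
  have hxy' := hR x (by simp) y (by simp) hxy
  have hyz' := hR y (by simp) z (by simp) hyz
  refine ⟨planeDet x y • z + planeDet x z • y, fun T hT hdir => ?_⟩
  refine exists_smul_eq_of_planeDet_eq_zero ?_ ?_
  · intro h
    have h' := congrArg (planeDet y) h
    apply mul_ne_zero hxy' hyz'
    simp only [planeDet, Pi.add_apply, Pi.smul_apply, smul_eq_mul, Pi.zero_apply] at h' ⊢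
    linear_combination h'
  · have h := sum_planeDet_mul_inv_planeDet_eq_zero hU hT hcov hR hdir x
    rw [Finset.sum_insert (by simp [hxy, hxz]), Finset.sum_pair hyz, planeDet_self, zero_mul,
      zero_add] at h
    have hy := (prod_erase_planeDet_sub hU hT (hcov y (by simp))).1
    have hz := (prod_erase_planeDet_sub hU hT (hcov z (by simp))).1
    field_simp at h
    simp only [planeDet, Pi.add_apply, Pi.smul_apply, smul_eq_mul] at h ⊢
    linear_combination h

end PowerSum

section Geometry

variable {F : Type*} [Field F]

theorem pgMem_iff_rep_mem {P : PGPoint F} {L : PGLine F} : pgMem P L ↔ P.rep ∈ L.val := by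
  rw [pgMem, Projectivization.submodule_eq, Submodule.span_singleton_le_iff_mem]

theorem PGPoint.eq_of_rep_eq_smul {P Q : PGPoint F} {c : F} (h : P.rep = c • Q.rep) : P = Q := by
  rw [← P.mk_rep, ← Q.mk_rep]
  exact (Projectivization.mk_eq_mk_iff' F _ _ P.rep_nonzero Q.rep_nonzero).2 ⟨c, h.symm⟩

theorem PGLine.eq_of_pgMem {P Q : PGPoint F} {L M : PGLine F} (hPQ : P ≠ Q) (hPL : pgMem P L)
    (hQL : pgMem Q L) (hPM : pgMem P M) (hQM : pgMem Q M) : L = M := by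
  by_contra hLM
  have hlt : L.val ⊓ M.val < L.val := by
    refine lt_of_le_of_ne inf_le_left fun h => hLM (Subtype.ext ?_)
    exact Submodule.eq_of_le_of_finrank_eq (inf_eq_left.1 h) (L.2.trans M.2.symm)
  have hrank := Submodule.finrank_lt_finrank_of_lt hlt
  rw [L.2] at hrank
  have heq : ∀ X : PGPoint F, pgMem X L → pgMem X M → X.submodule = L.val ⊓ M.val :=
    fun X hL hM => Submodule.eq_of_le_of_finrank_le (le_inf hL hM)
      (by rw [X.finrank_submodule]; omega)
  exact hPQ (Projectivization.submodule_injective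
    ((heq P hPL hPM).trans (heq Q hQL hQM).symm))

/-- Coordinates of `PG(2,F)` in which `ℓ` is the line at infinity and `N` the origin. -/
theorem exists_affine_coordinates (ℓ : PGLine F) (N : PGPoint F) (h : ¬ pgMem N ℓ) :
    ∃ g : (Fin 3 → F) ≃ₗ[F] (Fin 3 → F), (∀ w, w ∈ ℓ.val ↔ g w 0 = 0) ∧
      g N.rep = ![1, 0, 0] := by
  have hN : N.rep ∉ ℓ.val := fun hN => h (pgMem_iff_rep_mem.2 hN)
  have hli : ∀ c : F, ∀ x ∈ ℓ.val, c • N.rep + x = 0 → c = 0 := by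
    intro c x hx hcx
    by_contra hc
    apply hN
    rw [← Submodule.smul_mem_iff _ hc, eq_neg_of_add_eq_zero_left hcx]
    exact neg_mem hx
  have hsup : ℓ.val ⊔ Submodule.span F {N.rep} = ⊤ := by
    have hlt : ℓ.val < ℓ.val ⊔ Submodule.span F {N.rep} := by
      refine lt_of_le_of_ne le_sup_left fun heq => hN ?_
      rw [heq]
      exact Submodule.mem_sup_right (Submodule.mem_span_singleton_self _)
    have hrank := Submodule.finrank_lt_finrank_of_lt hlt
    rw [ℓ.2] at hrank
    refine Submodule.eq_of_le_of_finrank_le le_top ?_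
    rw [finrank_top, Module.finrank_fin_fun]
    omega
  have hsp : ∀ z : Fin 3 → F, ∃ c : F, z + c • N.rep ∈ ℓ.val := by
    intro z
    obtain ⟨x, hx, y, hy, rfl⟩ := Submodule.mem_sup.1 (hsup ▸ Submodule.mem_top (x := z))
    obtain ⟨c, rfl⟩ := Submodule.mem_span_singleton.1 hy
    exact ⟨-c, by simpa using hx⟩
  let b : Module.Basis (Fin 2) F ℓ.val := Module.finBasisOfFinrankEq F ℓ.val ℓ.2
  let B : Module.Basis (Fin 3) F (Fin 3 → F) := Module.Basis.mkFinCons N.rep b hli hsp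
  have hB : ⇑B = Fin.cons N.rep (Subtype.val ∘ b) := Module.Basis.coe_mkFinCons _ _ hli hsp
  have hB0 : B 0 = N.rep := by rw [hB]; rfl
  refine ⟨B.equivFun, fun w => ?_, ?_⟩
  · have hw := B.sum_equivFun w
    have hB1 : B 1 = b 0 := by rw [hB]; rfl
    have hB2 : B 2 = b 1 := by rw [hB]; rfl
    rw [Fin.sum_univ_three, hB0, hB1, hB2, add_assoc] at hw
    have hmem : B.equivFun w 1 • (b 0 : Fin 3 → F) + B.equivFun w 2 • (b 1 : Fin 3 → F) ∈ ℓ.val :=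
      add_mem (Submodule.smul_mem _ _ (b 0).2) (Submodule.smul_mem _ _ (b 1).2)
    constructor
    · intro hwl
      by_contra h0
      apply hN
      rw [← Submodule.smul_mem_iff _ h0, ← Submodule.add_mem_iff_left _ hmem, hw]
      exact hwl
    · intro h0
      rw [h0, zero_smul, zero_add] at hw
      rwa [hw] at hmem
  · rw [← hB0]
    ext i
    rw [B.equivFun_self]
    fin_cases i <;> simp

variable (g : (Fin 3 → F) ≃ₗ[F] (Fin 3 → F))

/-- The coordinates of a direction, i.e. of a point at infinity. -/
noncomputable def directionCoord (P : PGPoint F) : Fin 2 → F := ![g P.rep 1, g P.rep 2]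

/-- The affine coordinates of a point off the line at infinity. -/
noncomputable def affineCoord (P : PGPoint F) : Fin 2 → F :=
  ![g P.rep 1 / g P.rep 0, g P.rep 2 / g P.rep 0]

variable {g}

theorem affineCoord_injOn {P Q : PGPoint F} (hP : g P.rep 0 ≠ 0) (hQ : g Q.rep 0 ≠ 0)
    (h : affineCoord g P = affineCoord g Q) : P = Q := by
  have h0 := congrFun h 0
  have h1 := congrFun h 1
  simp only [affineCoord, Matrix.cons_val_zero, Matrix.cons_val_one] at h0 h1
  refine PGPoint.eq_of_rep_eq_smul (c := g P.rep 0 / g Q.rep 0) (g.injective ?_)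
  rw [map_smul]
  ext i
  fin_cases i
  · simp [hQ]
  · simp only [Fin.mk_one, Pi.smul_apply, smul_eq_mul]
    field_simp at h0 ⊢
    linear_combination h0
  · simp only [Fin.reduceFinMk, Pi.smul_apply, smul_eq_mul]
    field_simp at h1 ⊢
    linear_combination h1

theorem directionCoord_ne_zero {P : PGPoint F} (hP : g P.rep 0 = 0) :
    directionCoord g P ≠ 0 := by
  intro h
  have h0 := congrFun h 0
  have h1 := congrFun h 1
  simp only [directionCoord, Matrix.cons_val_zero, Matrix.cons_val_one, Pi.zero_apply] at h0 h1
  apply P.rep_nonzero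
  apply g.injective
  ext i
  fin_cases i <;> simp [h0, h1, hP]

theorem eq_of_planeDet_directionCoord_eq_zero {P Q : PGPoint F} (hP : g P.rep 0 = 0)
    (hQ : g Q.rep 0 = 0) (h : planeDet (directionCoord g P) (directionCoord g Q) = 0) :
    P = Q := by
  obtain ⟨c, hc⟩ := exists_smul_eq_of_planeDet_eq_zero (directionCoord_ne_zero hP) h
  have h0 := congrFun hc 0
  have h1 := congrFun hc 1
  simp only [directionCoord, Matrix.cons_val_zero, Matrix.cons_val_one, Pi.smul_apply] at h0 h1
  refine (PGPoint.eq_of_rep_eq_smul (c := c) (g.injective ?_)).symm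
  rw [map_smul]
  ext i
  fin_cases i
  · simp [hP, hQ]
  · simpa using h0
  · simpa using h1

/-- The affine line `det(d, x) = c` of direction `d`. -/
theorem exists_line_of_direction (g : (Fin 3 → F) ≃ₗ[F] (Fin 3 → F)) {d : Fin 2 → F}
    (hd : d ≠ 0) (c : F) :
    ∃ L : PGLine F,
      (∀ P : PGPoint F, g P.rep 0 = 0 → (pgMem P L ↔ planeDet d (directionCoord g P) = 0)) ∧
      (∀ P : PGPoint F, g P.rep 0 ≠ 0 → (pgMem P L ↔ planeDet d (affineCoord g P) = c)) := by
  let f : Module.Dual F (Fin 3 → F) :=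
    (d 0 • LinearMap.proj 2 - d 1 • LinearMap.proj 1 - c • LinearMap.proj 0) ∘ₗ g.toLinearMap
  have hf : ∀ w, f w = d 0 * g w 2 - d 1 * g w 1 - c * g w 0 := fun w => rfl
  have hne : f ≠ 0 := by
    intro h
    apply hd
    have h1 := LinearMap.congr_fun h (g.symm ![0, 1, 0])
    have h2 := LinearMap.congr_fun h (g.symm ![0, 0, 1])
    rw [hf, LinearEquiv.apply_symm_apply] at h1 h2
    ext i
    fin_cases i
    · simpa using h2
    · simpa using h1
  have hrank := Module.Dual.finrank_ker_add_one_of_ne_zero hne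
  rw [Module.finrank_fin_fun] at hrank
  refine ⟨⟨LinearMap.ker f, by omega⟩, fun P hP => ?_, fun P hP => ?_⟩
  · rw [pgMem_iff_rep_mem, LinearMap.mem_ker, hf, hP]
    simp [planeDet, directionCoord]
  · rw [pgMem_iff_rep_mem, LinearMap.mem_ker, hf]
    simp only [planeDet, affineCoord, Matrix.cons_val_zero, Matrix.cons_val_one]
    field_simp
    exact sub_eq_zero

/-- A line through two points collinear with the origin passes through the origin. -/
theorem pgMem_origin_of_affineCoord_eq_smul {N P Q : PGPoint F} (hN : g N.rep = ![1, 0, 0])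
    (hP : g P.rep 0 ≠ 0) (hQ : g Q.rep 0 ≠ 0) (hPQ : P ≠ Q) {w : Fin 2 → F} {c d : F}
    (hc : affineCoord g P = c • w) (hd : affineCoord g Q = d • w) {m : PGLine F}
    (hPm : pgMem P m) (hQm : pgMem Q m) : pgMem N m := by
  have hcd : d - c ≠ 0 := by
    intro h
    rw [sub_eq_zero] at h
    exact hPQ (affineCoord_injOn hP hQ (by rw [hc, hd, h]))
  rw [pgMem_iff_rep_mem] at hPm hQm ⊢
  rw [← Submodule.smul_mem_iff _ hcd]
  have hrep : ∀ (X : PGPoint F) (e : F), g X.rep 0 ≠ 0 → affineCoord g X = e • w →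
      g ((g X.rep 0)⁻¹ • X.rep) = ![1, e * w 0, e * w 1] := by
    intro X e hX he
    have h0 := congrFun he 0
    have h1 := congrFun he 1
    simp only [affineCoord, Matrix.cons_val_zero, Matrix.cons_val_one, Pi.smul_apply,
      smul_eq_mul] at h0 h1
    rw [map_smul]
    ext i
    fin_cases i
    · simp [hX]
    · simp [← h0, div_eq_inv_mul]
    · simp [← h1, div_eq_inv_mul]
  have : (d - c) • N.rep = d • ((g P.rep 0)⁻¹ • P.rep) - c • ((g Q.rep 0)⁻¹ • Q.rep) := by
    apply g.injective
    rw [map_sub, map_smul, map_smul g d, map_smul g c, hrep P c hP hc, hrep Q d hQ hd, hN]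
    ext i
    fin_cases i <;> simp <;> ring
  rw [this]
  exact sub_mem (Submodule.smul_mem _ _ (Submodule.smul_mem _ _ hPm))
    (Submodule.smul_mem _ _ (Submodule.smul_mem _ _ hQm))

/-- A point common to the tangents at the points of a secant `ℓ` does not lie on `ℓ`. -/
theorem not_pgMem_of_concurrent_tangents {S : Set (PGPoint F)} {ℓ : PGLine F}
    (hℓ : 1 < nsec S ℓ) (htan : ∀ P ∈ S, pgMem P ℓ → ∃ t : PGLine F, pgMem P t ∧ nsec S t = 1)
    {N : PGPoint F}
    (hN : ∀ P ∈ S, pgMem P ℓ → ∀ t : PGLine F, pgMem P t → nsec S t = 1 → pgMem N t) :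
    ¬ pgMem N ℓ := by
  intro hNℓ
  obtain ⟨P, ⟨hPS, hPℓ⟩, hPN⟩ := Set.exists_ne_of_one_lt_ncard hℓ N
  obtain ⟨t, hPt, ht⟩ := htan P hPS hPℓ
  have := PGLine.eq_of_pgMem hPN hPt (hN P hPS hPℓ t hPt ht) hPℓ hNℓ
  rw [this] at ht
  omega

end Geometry

/-- Let `S` be a set of `q − 1 + a` points in `PG(2,q)`, `q = p^h`, `a ≥ 3`, and let `ℓ` be an
`a`-secant of `S` such that at each point of `S ∩ ℓ` there is a unique tangent to `S`;
let `N` be the nucleus of `ℓ`.  If some point of `S` lies on no tangent to `S`, then `p ∣ a`.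
Moreover, if `a = 3` and there are two (distinct) points of `S` each lying on no tangent to
`S`, then the line determined by these two points contains `N`. -/
theorem stmt_17 {F : Type*} [Field F] [Fintype F] (p h q : ℕ) (hp : p.Prime) (hq : q = p ^ h)
    (hcard : Fintype.card F = q)
    (a : ℕ) (ha : 3 ≤ a)
    (S : Set (PGPoint F)) (hsize : S.ncard = q - 1 + a)
    (ℓ : PGLine F) (hℓ : nsec S ℓ = a)
    (htan : ∀ P ∈ S, pgMem P ℓ → ∃! t : PGLine F, pgMem P t ∧ nsec S t = 1)
    (N : PGPoint F)
    (hN : ∀ P ∈ S, pgMem P ℓ → ∀ t : PGLine F, pgMem P t → nsec S t = 1 → pgMem N t) :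
    ((∃ T ∈ S, ∀ t : PGLine F, pgMem T t → nsec S t ≠ 1) → p ∣ a) ∧
    (a = 3 →
      ∀ T₁ ∈ S, ∀ T₂ ∈ S, T₁ ≠ T₂ →
        (∀ t : PGLine F, pgMem T₁ t → nsec S t ≠ 1) →
        (∀ t : PGLine F, pgMem T₂ t → nsec S t ≠ 1) →
        ∀ m : PGLine F, pgMem T₁ m → pgMem T₂ m → pgMem N m) := by
  classical
  have hNℓ : ¬ pgMem N ℓ := not_pgMem_of_concurrent_tangents (by omega)
    (fun P hP hPℓ => (htan P hP hPℓ).exists) hN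
  obtain ⟨g, hg, hgN⟩ := exists_affine_coordinates ℓ N hNℓ
  have hmem : ∀ P : PGPoint F, pgMem P ℓ ↔ g P.rep 0 = 0 :=
    fun P => pgMem_iff_rep_mem.trans (hg _)
  have hSfin : S.Finite := Set.finite_of_ncard_pos (by omega)
  have hDfin : {P ∈ S | pgMem P ℓ}.Finite := hSfin.subset (Set.sep_subset _ _)
  have hAfin : {P ∈ S | ¬ pgMem P ℓ}.Finite := hSfin.subset (Set.sep_subset _ _)
  obtain ⟨R, hRdef⟩ : ∃ R, R = hDfin.toFinset.image (directionCoord g) := ⟨_, rfl⟩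
  obtain ⟨U, hUdef⟩ : ∃ U, U = hAfin.toFinset.image (affineCoord g) := ⟨_, rfl⟩
  have memR : ∀ r, r ∈ R ↔ ∃ P ∈ S, g P.rep 0 = 0 ∧ directionCoord g P = r := by
    intro r; simp [hRdef, hmem, and_assoc]
  have memU : ∀ u, u ∈ U ↔ ∃ P ∈ S, g P.rep 0 ≠ 0 ∧ affineCoord g P = u := by
    intro u; simp [hUdef, hmem, and_assoc]
  have hRcard : R.card = a := by
    rw [hRdef, Finset.card_image_of_injOn, ← Set.ncard_eq_toFinset_card _ hDfin]
    · exact hℓ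
    · intro P hP Q hQ hPQ
      simp only [Set.Finite.coe_toFinset, Set.mem_ofPred_eq, hmem] at hP hQ
      exact eq_of_planeDet_directionCoord_eq_zero hP.2 hQ.2 (by rw [hPQ, planeDet_self])
  have hU : U.card = Fintype.card F - 1 := by
    rw [hUdef, Finset.card_image_of_injOn, ← Set.ncard_eq_toFinset_card _ hAfin]
    · have hsplit := Set.ncard_inter_add_ncard_sdiff_eq_ncard S {P | pgMem P ℓ} hSfin
      have h1 : (S ∩ {P | pgMem P ℓ}).ncard = a := hℓ
      have h2 : (S \ {P | pgMem P ℓ}).ncard = {P ∈ S | ¬ pgMem P ℓ}.ncard := rfl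
      omega
    · intro P hP Q hQ hPQ
      simp only [Set.Finite.coe_toFinset, Set.mem_ofPred_eq, hmem] at hP hQ
      exact affineCoord_injOn hP.2 hQ.2 hPQ
  have hR : ∀ r ∈ R, ∀ s ∈ R, r ≠ s → planeDet r s ≠ 0 := by
    intro r hr s hs hrs hdet
    obtain ⟨P, -, hP, rfl⟩ := (memR r).1 hr
    obtain ⟨Q, -, hQ, rfl⟩ := (memR s).1 hs
    exact hrs (congrArg _ (eq_of_planeDet_directionCoord_eq_zero hP hQ hdet))
  have hcov : ∀ r ∈ R, ∀ c : F, c ≠ 0 → ∃ u ∈ U, planeDet r u = c := by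
    intro r hr c hc
    obtain ⟨P, hPS, hP, rfl⟩ := (memR r).1 hr
    obtain ⟨L, hLinf, hLaff⟩ := exists_line_of_direction g (directionCoord_ne_zero hP) c
    by_contra hnone
    push Not at hnone
    have hPL : pgMem P L := (hLinf P hP).2 (planeDet_self _)
    have hL : nsec S L = 1 := by
      refine Set.ncard_eq_one.2 ⟨P, Set.eq_singleton_iff_unique_mem.2 ⟨⟨hPS, hPL⟩, ?_⟩⟩
      rintro Q ⟨hQS, hQL⟩
      by_cases hQ : g Q.rep 0 = 0
      · exact (eq_of_planeDet_directionCoord_eq_zero hP hQ ((hLinf Q hQ).1 hQL)).symm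
      · exact absurd ((hLaff Q hQ).1 hQL) (hnone _ ((memU _).2 ⟨Q, hQS, hQ, rfl⟩))
    have hNL := (hLaff N (by simp [hgN])).1 (hN P hPS ((hmem P).2 hP) L hPL hL)
    exact hc (by simpa [planeDet, affineCoord, hgN] using hNL.symm)
  have haff : ∀ T ∈ S, (∀ t : PGLine F, pgMem T t → nsec S t ≠ 1) → g T.rep 0 ≠ 0 := by
    intro T hTS hT h0
    obtain ⟨t, hTt, ht⟩ := (htan T hTS ((hmem T).2 h0)).exists
    exact hT t hTt ht
  have hdir : ∀ T ∈ S, (∀ t : PGLine F, pgMem T t → nsec S t ≠ 1) →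
      ∀ d : Fin 2 → F, d ≠ 0 → (∀ r ∈ R, planeDet d r ≠ 0) →
        ∃ u ∈ U, u ≠ affineCoord g T ∧ planeDet d u = planeDet d (affineCoord g T) := by
    intro T hTS hT d hd hdR
    have hTaff := haff T hTS hT
    obtain ⟨L, hLinf, hLaff⟩ := exists_line_of_direction g hd (planeDet d (affineCoord g T))
    have hTL : pgMem T L := (hLaff T hTaff).2 rfl
    obtain ⟨Q, hQS, hQL, hQT⟩ : ∃ Q ∈ S, pgMem Q L ∧ Q ≠ T := by
      by_contra hnone
      push Not at hnone
      exact hT L hTL (Set.ncard_eq_one.2 ⟨T, Set.eq_singleton_iff_unique_mem.2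
        ⟨⟨hTS, hTL⟩, fun Q hQ => hnone Q hQ.1 hQ.2⟩⟩)
    have hQ : g Q.rep 0 ≠ 0 := fun hQ =>
      hdR _ ((memR _).2 ⟨Q, hQS, hQ, rfl⟩) ((hLinf Q hQ).1 hQL)
    exact ⟨affineCoord g Q, (memU _).2 ⟨Q, hQS, hQ, rfl⟩,
      fun heq => hQT (affineCoord_injOn hQ hTaff heq), (hLaff Q hQ).1 hQL⟩
  refine ⟨?_, ?_⟩
  · rintro ⟨T, hTS, hT⟩
    have hzero := cast_card_directions_eq_zero hU
      ((memU _).2 ⟨T, hTS, haff T hTS hT, rfl⟩) hcov hR (hdir T hTS hT)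
    rw [hRcard] at hzero
    have : Fact p.Prime := ⟨hp⟩
    have : CharP F p := charP_of_card_eq_prime_pow (hcard.trans hq)
    exact (CharP.cast_eq_zero_iff F p a).1 hzero
  · rintro rfl T₁ hT₁S T₂ hT₂S hne hT₁ hT₂ m hm₁ hm₂
    obtain ⟨w, hw⟩ := exists_forall_eq_smul_of_card_eq_three hU hcov hR hRcard
    have h₁ := haff T₁ hT₁S hT₁
    have h₂ := haff T₂ hT₂S hT₂
    obtain ⟨c, hc⟩ := hw _ ((memU _).2 ⟨T₁, hT₁S, h₁, rfl⟩) (hdir T₁ hT₁S hT₁)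
    obtain ⟨d, hd⟩ := hw _ ((memU _).2 ⟨T₂, hT₂S, h₂, rfl⟩) (hdir T₂ hT₂S hT₂)
    exact pgMem_origin_of_affineCoord_eq_smul hgN h₁ h₂ hne hc hd hm₁ hm₂
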